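/- Concentration of the signed occurrence profile: fix a positive rational c, set λ = 3c, and let n range over positive integers with c·n ∈ ℕ. Fix integers 0 ≤ p ≤ x and a real ε > 0. Then the probability that a uniformly random formula F : Fin (c·n) → (Fin n × Bool)³ satisfies |ω_{x,p}(F) − κ_{x,p}| > ε tends to 0 as n → ∞ (along the integers n with c·n ∈ ℕ). -/

import Mathlib

open Filter

/-- `κ_{x,p} = 2^{-x} (x choose p) e^{-λ} λ^x / x!`. -/
noncomputable def kappa (lam : ℝ) (x p : ℕ) : ℝ :=
  (2 : ℝ) ^ (-(x : ℝ)) * (Nat.choose x p : ℝ) *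
    (Real.exp (-lam) * lam ^ x / (Nat.factorial x : ℝ))

/-- Number of occurrences of the variable `v` in the formula `F`. -/
noncomputable def numOccs {n m : ℕ} (F : Fin m → Fin 3 → Fin n × Bool) (v : Fin n) : ℕ :=
  Nat.card {ij : Fin m × Fin 3 // (F ij.1 ij.2).1 = v}

/-- Number of positive occurrences of the variable `v` in the formula `F`. -/
noncomputable def numPosOccs {n m : ℕ} (F : Fin m → Fin 3 → Fin n × Bool) (v : Fin n) : ℕ :=
  Nat.card {ij : Fin m × Fin 3 // F ij.1 ij.2 = (v, true)}

/-- `ω_{x,p}(F)`: the proportion (among the `n` variables) of variables having `x`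
occurrences in `F`, `p` of them positive. -/
noncomputable def omegaProp (n m x p : ℕ) (F : Fin m → Fin 3 → Fin n × Bool) : ℝ :=
  (Nat.card {v : Fin n // numOccs F v = x ∧ numPosOccs F v = p} : ℝ) / (n : ℝ)

/-!
The proof is a second moment argument. Fix a set `S` of `d` variables. A formula is a word of length
`3 * m` over the alphabet of the `2 * n` literals. Requiring every variable of `S` to have `x`
occurrences, `p` of them positive, prescribes how often each of `2 * d` letters occurs, so the
number of such formulas is a coefficient of `(X₁ + ⋯ + X_{2d} + 2 * n - 2 * d) ^ (3 * m)`. This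
gives a closed form for their proportion, which depends on `S` only through `d` and tends to
`κ_{x,p} ^ d`. The cases `d = 1` and `d = 2` make the mean square of `ω_{x,p} - κ_{x,p}` tend to
`0`, and Chebyshev's inequality concludes.
-/

section Words

open Finset MvPolynomial
open scoped Nat

variable {ι α : Type*} [Fintype ι] [DecidableEq α]

/-- The weight of the letter `b` in the generating function counting words over `α` by their numbers
of occurrences of the letters in `L`: each letter of `L` has its own indeterminate, and the other
letters are not tracked. -/
noncomputable def letterMonomial (L : Finset α) (b : α) : MvPolynomial L ℕ :=
  if h : b ∈ L then X ⟨b, h⟩ else 1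

lemma sum_letterMonomial [Fintype α] (L : Finset α) :
    ∑ b, letterMonomial L b = ∑ b : L, X b + C (Fintype.card α - #L) := by
  rw [← sum_add_sum_compl L, ← sum_coe_sort L]
  congr 1
  · exact sum_congr rfl fun b _ ↦ dif_pos b.2
  · rw [sum_congr rfl fun b hb ↦ dif_neg (mem_compl.1 hb), sum_const, card_compl, nsmul_one]
    rfl

lemma letterMonomial_eq_monomial (L : Finset α) (b : α) :
    letterMonomial L b =
      monomial (Finsupp.equivFunOnFinite.symm fun c : L ↦ if b = c then 1 else 0) 1 := by
  unfold letterMonomial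
  split_ifs with h
  · refine congrArg (monomial · 1) (Finsupp.ext fun c ↦ ?_)
    simp [Finsupp.single_apply, Subtype.ext_iff]
  · refine congrArg (monomial · 1) (Finsupp.ext fun c ↦ ?_)
    have hbc : b ≠ c := fun hbc ↦ h (hbc ▸ c.2)
    simp [hbc]

lemma prod_letterMonomial (L : Finset α) (G : ι → α) :
    ∏ i, letterMonomial L (G i) =
      monomial (Finsupp.equivFunOnFinite.symm fun b : L ↦ #{i | G i = b}) 1 := by
  simp only [letterMonomial_eq_monomial, ← monomial_sum_one]
  refine congrArg (monomial · 1) (Finsupp.ext fun b ↦ ?_)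
  simp

lemma card_words_eq_coeff [DecidableEq ι] [Fintype α] (L : Finset α) (k : α → ℕ) :
    #{G : ι → α | ∀ b ∈ L, #{i | G i = b} = k b} =
      coeff (Finsupp.equivFunOnFinite.symm fun b : L ↦ k b)
        ((∑ b, letterMonomial L b) ^ Fintype.card ι) := by
  rw [← card_univ, ← prod_const, prod_univ_sum, Fintype.piFinset_univ, coeff_sum, card_filter]
  refine sum_congr rfl fun G _ ↦ ?_
  rw [prod_letterMonomial, coeff_monomial]
  simp [funext_iff]

lemma coeff_sum_X_add_C_pow {σ R : Type*} [Fintype σ] [CommSemiring R] (B : R) (N : ℕ)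
    (d : σ →₀ ℕ) :
    coeff d ((∑ j, X j + C B) ^ N : MvPolynomial σ R) =
      N.choose d.degree * d.multinomial * B ^ (N - d.degree) := by
  have hterm (m : ℕ) :
      coeff d ((∑ j, X j) ^ m * C B ^ (N - m) * (N.choose m : MvPolynomial σ R)) =
        if d.degree = m then N.choose m * d.multinomial * B ^ (N - m) else 0 := by
    rw [← map_natCast C, ← C_pow, mul_assoc, ← C_mul, mul_comm, coeff_C_mul,
      coeff_sum_X_pow_of_fintype]
    change _ * (Nat.cast (if d.degree = m then _ else _)) = _
    split_ifs
    · ring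
    · rw [Nat.cast_zero, mul_zero]
  simp only [add_pow, coeff_sum, hterm, sum_ite_eq, mem_range]
  split_ifs with h
  · rfl
  · rw [Nat.choose_eq_zero_of_lt (by omega), Nat.cast_zero, zero_mul, zero_mul]

theorem prod_factorial_mul_card_words [DecidableEq ι] [Fintype α] (L : Finset α) (k : α → ℕ) :
    (∏ b ∈ L, (k b)!) * #{G : ι → α | ∀ b ∈ L, #{i | G i = b} = k b} =
      (Fintype.card ι).descFactorial (∑ b ∈ L, k b) *
        (Fintype.card α - #L) ^ (Fintype.card ι - ∑ b ∈ L, k b) := by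
  set d : L →₀ ℕ := Finsupp.equivFunOnFinite.symm fun b ↦ k b
  have hdeg : d.degree = ∑ b ∈ L, k b := by
    rw [Finsupp.degree_eq_sum, ← sum_coe_sort L]; rfl
  have hmul : (∏ b ∈ L, (k b)!) * d.multinomial = (∑ b ∈ L, k b)! := by
    rw [Finsupp.multinomial_eq_of_support_subset (subset_univ _), ← prod_coe_sort, ← sum_coe_sort]
    exact Nat.multinomial_spec univ d
  rw [card_words_eq_coeff, sum_letterMonomial, coeff_sum_X_add_C_pow, hdeg,
    Nat.descFactorial_eq_factorial_mul_choose, ← hmul]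
  simp only [Nat.cast_id]
  ring

end Words

section SecondMoment

open Finset Topology
open scoped BigOperators

variable {Ω V : Type*} [Fintype Ω] [Fintype V]

lemma dens_eq_expect_ite {α : Type*} [Fintype α] [DecidableEq α] (s : Finset α) :
    (s.dens : ℝ) = 𝔼 a, if a ∈ s then 1 else 0 := by
  simp [← expect_indicator_one, Set.indicator_apply]

lemma expect_dens [DecidableEq Ω] (E : V → Finset Ω) :
    𝔼 ω, (dens {v | ω ∈ E v} : ℝ) = 𝔼 v, (dens (E v) : ℝ) := by
  classical
  simp only [dens_eq_expect_ite, mem_filter_univ]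
  exact expect_comm ..

lemma expect_dens_sq [DecidableEq Ω] (E : V → Finset Ω) :
    𝔼 ω, (dens {v | ω ∈ E v} : ℝ) ^ 2 = 𝔼 v, 𝔼 w, (dens (E v ∩ E w) : ℝ) := by
  classical
  simp only [dens_eq_expect_ite, mem_filter_univ, sq, Fintype.expect_mul_expect, mem_inter,
    ite_zero_mul_ite_zero, mul_one]
  rw [expect_comm]
  exact expect_congr rfl fun v _ ↦ expect_comm ..

lemma expect_dens_sub_sq_le [DecidableEq Ω] [Nonempty V] {E : V → Finset Ω} {a b : ℝ}
    (ha : ∀ v, (dens (E v) : ℝ) = a) (hb : ∀ v w, v ≠ w → (dens (E v ∩ E w) : ℝ) = b) (K : ℝ) :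
    𝔼 ω, ((dens {v | ω ∈ E v} : ℝ) - K) ^ 2 ≤
      b + (a - b) / Fintype.card V - 2 * K * a + K ^ 2 := by
  classical
  have hmean : 𝔼 ω, (dens {v | ω ∈ E v} : ℝ) = a := by
    simp only [expect_dens, ha, Fintype.expect_const]
  have hpair (v w : V) : (dens (E v ∩ E w) : ℝ) = b + if v = w then a - b else 0 := by
    split_ifs with h
    · rw [h, inter_self, ha]; ring
    · rw [hb v w h, add_zero]
  have hsq : 𝔼 ω, (dens {v | ω ∈ E v} : ℝ) ^ 2 = b + (a - b) / Fintype.card V := by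
    simp only [expect_dens_sq, hpair, expect_add_distrib, Fintype.expect_const,
      Fintype.expect_ite_eq, NNRat.smul_def]
    push_cast
    rw [div_eq_inv_mul]
  -- Only `≤`: an expectation over an empty `Ω` is `0`.
  have hconst : 𝔼 _ω : Ω, K ^ 2 ≤ K ^ 2 := by
    cases isEmpty_or_nonempty Ω <;> simp [sq_nonneg]
  simp only [sub_sq, expect_add_distrib, expect_sub_distrib, mul_right_comm _ _ K, ← mul_expect,
    hmean, hsq]
  linarith

lemma dens_lt_abs_le_expect_sq (X : Ω → ℝ) {ε : ℝ} (hε : 0 < ε) :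
    (dens {ω | ε < |X ω|} : ℝ) ≤ (𝔼 ω, X ω ^ 2) / ε ^ 2 := by
  classical
  rw [dens_eq_expect_ite, expect_div]
  refine expect_le_expect fun ω _ ↦ ?_
  simp only [mem_filter_univ]
  split_ifs with h
  · rw [one_le_div (by positivity), ← sq_abs (X ω)]
    gcongr
  · positivity

theorem tendsto_dens_lt_abs_dens_sub {T : Type*} {l : Filter T} {Ω V : T → Type*}
    [∀ t, Fintype (Ω t)] [∀ t, DecidableEq (Ω t)] [∀ t, Fintype (V t)]
    {E : ∀ t, V t → Finset (Ω t)} {a b : T → ℝ} {K ε : ℝ}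
    (hV : Tendsto (fun t ↦ (Fintype.card (V t) : ℝ)) l atTop)
    (ha : ∀ t v, (dens (E t v) : ℝ) = a t)
    (hb : ∀ t v w, v ≠ w → (dens (E t v ∩ E t w) : ℝ) = b t)
    (haK : Tendsto a l (𝓝 K)) (hbK : Tendsto b l (𝓝 (K ^ 2))) (hε : 0 < ε) :
    Tendsto (fun t ↦ (dens {ω | ε < |(dens {v | ω ∈ E t v} : ℝ) - K|} : ℝ)) l (𝓝 0) := by
  classical
  have hlim := ((((hbK.add ((haK.sub hbK).div_atTop hV)).sub (haK.const_mul (2 * K))).add_const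
    (K ^ 2)).div_const (ε ^ 2))
  rw [show (K ^ 2 + 0 - 2 * K * K + K ^ 2) / ε ^ 2 = 0 by ring] at hlim
  refine squeeze_zero' (.of_forall fun t ↦ by positivity) ?_ hlim
  filter_upwards [hV.eventually_gt_atTop 0] with t ht
  have : Nonempty (V t) := Fintype.card_pos_iff.1 (mod_cast ht)
  refine (dens_lt_abs_le_expect_sq _ hε).trans ?_
  gcongr
  exact expect_dens_sub_sq_le (ha t) (hb t) K

end SecondMoment

section Poisson

open Topology

variable {T : Type*} {l : Filter T} {N A : T → ℕ} {r : ℝ}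

lemma tendsto_natCast_sub_div (hA : Tendsto A l atTop)
    (hN : Tendsto (fun t ↦ (N t / A t : ℝ)) l (𝓝 r)) (s : ℕ) :
    Tendsto (fun t ↦ ((N t - s : ℕ) / A t : ℝ)) l (𝓝 r) := by
  have hs : Tendsto (fun t ↦ (s / A t : ℝ)) l (𝓝 0) :=
    tendsto_const_nhds.div_atTop (tendsto_natCast_atTop_atTop.comp hA)
  refine tendsto_of_tendsto_of_tendsto_of_le_of_le (by simpa using hN.sub hs) hN
    (fun t ↦ ?_) fun t ↦ ?_
  · rw [← sub_div]
    gcongr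
    rw [sub_le_iff_le_add, ← Nat.cast_add]
    exact Nat.cast_le.2 le_tsub_add
  · dsimp only
    gcongr
    exact Nat.sub_le ..

lemma tendsto_descFactorial_div_pow (hA : Tendsto A l atTop)
    (hN : Tendsto (fun t ↦ (N t / A t : ℝ)) l (𝓝 r)) (s : ℕ) :
    Tendsto (fun t ↦ ((N t).descFactorial s / A t ^ s : ℝ)) l (𝓝 (r ^ s)) := by
  induction s with
  | zero => simpa using tendsto_const_nhds
  | succ s ih =>
    simpa only [Nat.descFactorial_succ, Nat.cast_mul, pow_succ', mul_div_mul_comm]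
      using (tendsto_natCast_sub_div hA hN s).mul ih

lemma tendsto_one_add_div_pow_of_ratio (hA : Tendsto A l atTop)
    (hN : Tendsto (fun t ↦ (N t / A t : ℝ)) l (𝓝 r)) (u : ℝ) :
    Tendsto (fun t ↦ (1 + u / A t) ^ N t) l (𝓝 (Real.exp (u * r))) := by
  have hA' := (tendsto_natCast_atTop_atTop (R := ℝ)).comp hA
  have hexp := ((Real.tendsto_one_add_div_rpow_exp u).comp hA').rpow hN
    (.inl (Real.exp_ne_zero u))
  rw [← Real.exp_mul] at hexp
  refine hexp.congr' ?_
  have hpos := ((tendsto_const_nhds (x := u)).div_atTop hA').eventually_const_lt (u := -1) (by simp)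
  filter_upwards [hpos, hA'.eventually_gt_atTop 0] with t ht hAt
  simp only [Function.comp_apply] at ht hAt ⊢
  rw [← Real.rpow_mul (by linarith), mul_div_cancel₀ _ hAt.ne', Real.rpow_natCast]

theorem tendsto_descFactorial_mul_pow_div_pow (hA : Tendsto A l atTop)
    (hN : Tendsto (fun t ↦ (N t / A t : ℝ)) l (𝓝 r)) (s d : ℕ) :
    Tendsto (fun t ↦ (((N t).descFactorial s * (A t - d) ^ (N t - s) : ℕ) / A t ^ N t : ℝ)) l
      (𝓝 (r ^ s * Real.exp (-d * r))) := by
  refine ((tendsto_descFactorial_div_pow hA hN s).mul (tendsto_one_add_div_pow_of_ratio hA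
    (tendsto_natCast_sub_div hA hN s) (-d))).congr' ?_
  filter_upwards [hA.eventually_ge_atTop d, hA.eventually_gt_atTop 0] with t hd hpos
  obtain hs | hs := lt_or_ge (N t) s
  · simp [Nat.descFactorial_of_lt hs]
  · rw [← pow_mul_pow_sub (A t : ℝ) hs, Nat.cast_mul, mul_div_mul_comm, Nat.cast_pow, ← div_pow,
      Nat.cast_sub hd, sub_div, div_self (by positivity), neg_div, sub_eq_add_neg]

end Poisson

section Formulas

open Finset Topology
open scoped Nat

variable {n m : ℕ} {x p : ℕ}

/-- The event that the variable `v` has `x` occurrences, `p` of them positive. -/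
noncomputable def formulasWithProfile (m x p : ℕ) (v : Fin n) :
    Finset (Fin m → Fin 3 → Fin n × Bool) :=
  {F | numOccs F v = x ∧ numPosOccs F v = p}

lemma omegaProp_eq_dens (F : Fin m → Fin 3 → Fin n × Bool) :
    omegaProp n m x p F = (dens {v | F ∈ formulasWithProfile m x p v} : ℝ) := by
  simp only [omegaProp, formulasWithProfile, mem_filter_univ, nnratCast_dens, Fintype.card_fin,
    Nat.card_eq_fintype_card, Fintype.card_subtype]

lemma numPosOccs_eq_card (F : Fin m → Fin 3 → Fin n × Bool) (v : Fin n) :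
    numPosOccs F v = #{ij : Fin m × Fin 3 | F ij.1 ij.2 = (v, true)} := by
  rw [numPosOccs, Nat.card_eq_fintype_card, Fintype.card_subtype]

lemma numOccs_eq_card_add_card (F : Fin m → Fin 3 → Fin n × Bool) (v : Fin n) :
    numOccs F v = #{ij : Fin m × Fin 3 | F ij.1 ij.2 = (v, true)} +
      #{ij : Fin m × Fin 3 | F ij.1 ij.2 = (v, false)} := by
  rw [numOccs, Nat.card_eq_fintype_card, Fintype.card_subtype,
    ← card_filter_add_card_filter_not (fun ij : Fin m × Fin 3 ↦ (F ij.1 ij.2).2 = true)]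
  simp [filter_filter, Prod.ext_iff]

lemma mem_formulasWithProfile_iff (hpx : p ≤ x) {F : Fin m → Fin 3 → Fin n × Bool} {v : Fin n} :
    F ∈ formulasWithProfile m x p v ↔
      ∀ s, #{ij : Fin m × Fin 3 | F ij.1 ij.2 = (v, s)} = if s then p else x - p := by
  simp only [formulasWithProfile, mem_filter_univ, numOccs_eq_card_add_card, numPosOccs_eq_card,
    Bool.forall_bool, if_true, Bool.false_eq_true, if_false]
  omega

/-- The probability that `d` given variables all have `x` occurrences, `p` of them positive, in a
uniformly random formula with `n` variables and `m` clauses, for `p ≤ x` and `d ≤ n`. If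
`d * x > 3 * m` the exponent truncates, but then the descending factorial vanishes. -/
noncomputable def jointProfileProb (x p d n m : ℕ) : ℝ :=
  ((3 * m).descFactorial (d * x) * (2 * n - 2 * d) ^ (3 * m - d * x) : ℕ) /
    ((2 * n : ℕ) : ℝ) ^ (3 * m) / (p ! * (x - p)!) ^ d

lemma card_formulas :
    (Fintype.card (Fin m → Fin 3 → Fin n × Bool) : ℝ) = (2 * n) ^ (3 * m) := by
  simp [← pow_mul, mul_comm]

lemma prod_factorial_mul_card_formulasWithProfile (hpx : p ≤ x) (S : Finset (Fin n)) :
    (p ! * (x - p)!) ^ #S * #{F | ∀ v ∈ S, F ∈ formulasWithProfile m x p v} =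
      (3 * m).descFactorial (#S * x) * (2 * n - 2 * #S) ^ (3 * m - #S * x) := by
  have hwords := prod_factorial_mul_card_words (ι := Fin m × Fin 3)
    (S ×ˢ (univ : Finset Bool)) fun b ↦ if b.2 then p else x - p
  have hcard : #{F | ∀ v ∈ S, F ∈ formulasWithProfile m x p v} =
      #{G : Fin m × Fin 3 → Fin n × Bool | ∀ b ∈ S ×ˢ (univ : Finset Bool),
        #{ij | G ij = b} = if b.2 then p else x - p} := by
    refine card_equiv (Equiv.curry _ _ _).symm fun F ↦ ?_
    simp [mem_formulasWithProfile_iff hpx, Function.uncurry_def, forall_and]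
  rw [← hcard] at hwords
  simpa [prod_product, sum_product, hpx, mul_comm] using hwords

lemma dens_forall_mem_formulasWithProfile (hpx : p ≤ x) (S : Finset (Fin n)) :
    (dens {F | ∀ v ∈ S, F ∈ formulasWithProfile m x p v} : ℝ) = jointProfileProb x p #S n m := by
  rw [nnratCast_dens, card_formulas, jointProfileProb,
    ← prod_factorial_mul_card_formulasWithProfile hpx]
  push_cast
  field_simp

lemma kappa_eq (hpx : p ≤ x) (lam : ℝ) :
    kappa lam x p = (lam / 2) ^ x * Real.exp (-lam) / (p ! * (x - p)!) := by
  rw [kappa, Nat.cast_choose ℝ hpx, Real.rpow_neg (by norm_num), Real.rpow_natCast, div_pow]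
  field_simp

lemma tendsto_jointProfileProb {l : Filter ℕ} {m : ℕ → ℕ} {c : ℝ} (hl : l ≤ atTop)
    (hm : Tendsto (fun n ↦ (m n / n : ℝ)) l (𝓝 c)) (hpx : p ≤ x) (d : ℕ) :
    Tendsto (fun n ↦ jointProfileProb x p d n (m n)) l (𝓝 (kappa (3 * c) x p ^ d)) := by
  have hA : Tendsto (fun n ↦ 2 * n) l atTop := (tendsto_id.const_mul_atTop' two_pos).mono_left hl
  have hratio : Tendsto (fun n ↦ ((3 * m n : ℕ) / (2 * n : ℕ) : ℝ)) l (𝓝 (3 * c / 2)) := by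
    convert hm.const_mul (3 / 2) using 2 <;> push_cast <;> ring
  have hlim := (tendsto_descFactorial_mul_pow_div_pow hA hratio (d * x) (2 * d)).div_const
    ((p ! * (x - p)!) ^ d)
  convert hlim using 2
  · rfl
  · rw [kappa_eq hpx, div_pow, mul_pow, ← Real.exp_nat_mul, ← pow_mul', Nat.cast_mul]
    ring_nf

theorem omega_concentration_general {l : Filter ℕ} {m : ℕ → ℕ} {c : ℝ} (hl : l ≤ atTop)
    (hm : Tendsto (fun n ↦ (m n / n : ℝ)) l (𝓝 c)) (hpx : p ≤ x) {ε : ℝ} (hε : 0 < ε) :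
    Tendsto (fun n ↦
        (Nat.card {F : Fin (m n) → Fin 3 → Fin n × Bool //
            ε < |omegaProp n (m n) x p F - kappa (3 * c) x p|} : ℝ) / (2 * n) ^ (3 * m n))
      l (𝓝 0) := by
  have hV : Tendsto (fun n ↦ (Fintype.card (Fin n) : ℝ)) l atTop := by
    simpa using tendsto_natCast_atTop_atTop.mono_left hl
  have hsingle (n : ℕ) (v : Fin n) :
      ((formulasWithProfile (m n) x p v).dens : ℝ) = jointProfileProb x p 1 n (m n) := by
    simpa using dens_forall_mem_formulasWithProfile (m := m n) hpx {v}
  have hpair (n : ℕ) (v w : Fin n) (hvw : v ≠ w) :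
      ((formulasWithProfile (m n) x p v ∩ formulasWithProfile (m n) x p w).dens : ℝ) =
        jointProfileProb x p 2 n (m n) := by
    simpa [card_pair hvw, filter_and] using
      dens_forall_mem_formulasWithProfile (m := m n) hpx {v, w}
  have hlim := tendsto_jointProfileProb hl hm hpx
  refine (tendsto_dens_lt_abs_dens_sub hV hsingle hpair (by simpa using hlim 1) (hlim 2) hε).congr
    fun n ↦ ?_
  simp only [← omegaProp_eq_dens]
  rw [nnratCast_dens, card_formulas, Nat.card_eq_fintype_card, Fintype.card_subtype]

lemma tendsto_toNat_num_mul_div {c : ℚ} (hc : 0 ≤ c) :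
    Tendsto (fun n : ℕ ↦ ((c * n).num.toNat / n : ℝ)) (atTop ⊓ 𝓟 {n : ℕ | (c * n).den = 1})
      (𝓝 c) := by
  refine tendsto_const_nhds.congr' ?_
  filter_upwards [mem_inf_of_left (eventually_gt_atTop 0), mem_inf_of_right (mem_principal_self _)]
    with n hn hden
  have hnum : ((c * n).num.toNat : ℚ) = c * n := by
    rw [← Int.cast_natCast, Int.toNat_of_nonneg (Rat.num_nonneg.2 (by positivity)),
      Rat.coe_int_num_of_den_eq_one hden]
  have hnum' : ((c * n).num.toNat : ℝ) = c * n := mod_cast hnum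
  rw [hnum', mul_div_cancel_right₀ _ (Nat.cast_ne_zero.2 (ne_of_gt hn))]

end Formulas

/-- concentration of the signed occurrence profile.  For a positive
rational `c`, `λ = 3c`, fixed `0 ≤ p ≤ x` and `ε > 0`, the probability that a uniformly
random formula with `c·n` clauses on `n` variables has `|ω_{x,p} − κ_{x,p}| > ε`
tends to `0` as `n → ∞` along the integers `n` with `c·n ∈ ℕ`. -/
theorem omega_concentration (c : ℚ) (hc : 0 < c) (x p : ℕ) (hpx : p ≤ x)
    (ε : ℝ) (hε : 0 < ε) :
    Tendsto (fun n : ℕ =>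
        (Nat.card {F : Fin ((c * (n : ℚ)).num.toNat) → Fin 3 → Fin n × Bool //
            ε < |omegaProp n ((c * (n : ℚ)).num.toNat) x p F - kappa (3 * (c : ℝ)) x p|} : ℝ) /
          ((2 * (n : ℝ)) ^ (3 * (c * (n : ℚ)).num.toNat)))
      (atTop ⊓ 𝓟 {n : ℕ | (c * (n : ℚ)).den = 1}) (nhds 0) :=
  omega_concentration_general inf_le_left (tendsto_toNat_num_mul_div hc.le) hpx hε
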